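/- Let k be a field, C a small category, M : C → Vec_k a pointwise finite-dimensional persistence module, and θ an endomorphism of M. Then M decomposes as a direct sum of submodules M = M' ⊕ M'', where for each object x of C one has M'_x = Im(θ_x^n) and M''_x = Ker(θ_x^n) for all sufficiently large n; moreover θ restricts to an automorphism of M' and to an endomorphism of M'' which is nilpotent at every object. -/

import Mathlib

namespace PModCat

open CategoryTheory

variable (k : Type) [Field k]

/-- A persistence module over a small category `C`: a functor from `C` to
`k`-vector spaces, given explicitly. -/
structure PersistenceModule (C : Type) [Category C] where
  V : C → Type
  [addCommGroup : ∀ x, AddCommGroup (V x)]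
  [module : ∀ x, Module k (V x)]
  map : ∀ {x y : C}, (x ⟶ y) → (V x →ₗ[k] V y)
  map_id : ∀ x : C, map (𝟙 x) = LinearMap.id
  map_comp : ∀ {x y z : C} (f : x ⟶ y) (g : y ⟶ z),
      map (f ≫ g) = (map g).comp (map f)

attribute [instance] PersistenceModule.addCommGroup PersistenceModule.module

variable {k}

/-- A morphism of persistence modules (a natural transformation). -/
structure Hom {C : Type} [Category C] (M N : PersistenceModule k C) where
  app : ∀ x, M.V x →ₗ[k] N.V x
  natural : ∀ {x y : C} (f : x ⟶ y), (N.map f).comp (app x) = (app y).comp (M.map f)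

/-- A morphism of persistence modules is an isomorphism iff it is pointwise bijective. -/
def IsIsoHom {C : Type} [Category C] {M N : PersistenceModule k C} (f : Hom M N) : Prop :=
  ∀ x, Function.Bijective (f.app x)

/-- Two persistence modules are isomorphic if there is a pointwise bijective
morphism between them. -/
def Isomorphic {C : Type} [Category C] (M N : PersistenceModule k C) : Prop :=
  ∃ f : Hom M N, IsIsoHom f

/-- The endomorphism `1 - θ` of `M`, for an endomorphism `θ` of `M`. -/
def oneSub {C : Type} [Category C] {M : PersistenceModule k C} (θ : Hom M M) : Hom M M where
  app x := LinearMap.id - θ.app x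
  natural {x y} f := by
    rw [LinearMap.comp_sub, LinearMap.sub_comp, θ.natural f, LinearMap.comp_id,
      LinearMap.id_comp]

/-- The direct sum of a family of persistence modules, taken pointwise
(`Π₀` is the finitely supported product, i.e. the direct sum). -/
noncomputable def directSum {C : Type} [Category C] {ι : Type}
    (N : ι → PersistenceModule k C) : PersistenceModule k C where
  V x := Π₀ i, (N i).V x
  map {x y} f := DFinsupp.mapRange.linearMap (fun i => (N i).map f)
  map_id x := by
    have h : (fun i => (N i).map (𝟙 x)) =
        fun i => (LinearMap.id : (N i).V x →ₗ[k] (N i).V x) :=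
      funext fun i => (N i).map_id x
    rw [h]
    exact DFinsupp.mapRange.linearMap_id
  map_comp {x y z} f g := by
    have h : (fun i => (N i).map (f ≫ g)) =
        fun i => ((N i).map g).comp ((N i).map f) :=
      funext fun i => (N i).map_comp f g
    rw [h]
    exact DFinsupp.mapRange.linearMap_comp _ _

/-- The binary direct sum of two persistence modules, taken pointwise. -/
def sum2 {C : Type} [Category C] (M N : PersistenceModule k C) : PersistenceModule k C where
  V x := M.V x × N.V x
  map f := (M.map f).prodMap (N.map f)
  map_id x := by
    rw [M.map_id, N.map_id]
    exact LinearMap.prodMap_id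
  map_comp f g := by
    rw [M.map_comp f g, N.map_comp f g]
    exact (LinearMap.prodMap_comp _ _ _ _).symm

/-- The zero persistence module predicate. -/
def IsZero {C : Type} [Category C] (M : PersistenceModule k C) : Prop :=
  ∀ x, ∀ v : M.V x, v = 0

/-- A persistence module is indecomposable if it is nonzero and whenever it is
isomorphic to a direct sum of two modules, one of the summands is zero. -/
def Indecomposable {C : Type} [Category C] (M : PersistenceModule k C) : Prop :=
  ¬ IsZero M ∧ ∀ M' M'' : PersistenceModule k C,
    Isomorphic M (sum2 M' M'') → IsZero M' ∨ IsZero M''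

end PModCat

theorem stmt9 {k : Type} [Field k] {C : Type} [CategoryTheory.SmallCategory C]
    (M : PModCat.PersistenceModule k C)
    (hfd : ∀ x, FiniteDimensional k (M.V x))
    (θ : PModCat.Hom M M) :
    ∃ M' M'' : ∀ x : C, Submodule k (M.V x),
      (∀ (x y : C) (f : x ⟶ y), (M' x).map (M.map f) ≤ M' y) ∧
      (∀ (x y : C) (f : x ⟶ y), (M'' x).map (M.map f) ≤ M'' y) ∧
      (∀ x, IsCompl (M' x) (M'' x)) ∧
      (∀ x, ∃ N : ℕ, ∀ n ≥ N,
        M' x = LinearMap.range ((θ.app x : M.V x →ₗ[k] M.V x) ^ n) ∧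
        M'' x = LinearMap.ker ((θ.app x : M.V x →ₗ[k] M.V x) ^ n)) ∧
      (∀ x, (M' x).map (θ.app x) = M' x) ∧
      (∀ x, ∀ m ∈ M' x, θ.app x m = 0 → m = 0) ∧
      (∀ x, ∃ n : ℕ, ∀ m ∈ M'' x, ((θ.app x : M.V x →ₗ[k] M.V x) ^ n) m = 0) := by
  have key : ∀ x, ∃ N : ℕ, ∀ n ≥ N,
      (⨅ m, LinearMap.range ((θ.app x : M.V x →ₗ[k] M.V x) ^ m)) =
        LinearMap.range ((θ.app x : M.V x →ₗ[k] M.V x) ^ n) ∧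
      (⨆ m, LinearMap.ker ((θ.app x : M.V x →ₗ[k] M.V x) ^ m)) =
        LinearMap.ker ((θ.app x : M.V x →ₗ[k] M.V x) ^ n) := by
    intro x
    have := hfd x
    exact Filter.eventually_atTop.mp
      ((LinearMap.eventually_iInf_range_pow_eq (θ.app x)).and
        (LinearMap.eventually_iSup_ker_pow_eq (θ.app x)))
  have nat : ∀ (x y : C) (f : x ⟶ y) (n : ℕ) (v : M.V x),
      M.map f (((θ.app x : M.V x →ₗ[k] M.V x) ^ n) v) =
        ((θ.app y : M.V y →ₗ[k] M.V y) ^ n) (M.map f v) := by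
    intro x y f n
    induction n with
    | zero => intro v; simp
    | succ n ih =>
      intro v
      have h := LinearMap.congr_fun (θ.natural f) v
      simp only [LinearMap.comp_apply] at h
      rw [pow_succ, pow_succ, Module.End.mul_apply, Module.End.mul_apply, ih, h]
  have compl : ∀ x, IsCompl (⨅ m, LinearMap.range ((θ.app x : M.V x →ₗ[k] M.V x) ^ m))
      (⨆ m, LinearMap.ker ((θ.app x : M.V x →ₗ[k] M.V x) ^ m)) := by
    intro x
    have := hfd x
    exact (LinearMap.isCompl_iSup_ker_pow_iInf_range_pow (θ.app x)).symm
  refine ⟨fun x => ⨅ m, LinearMap.range ((θ.app x : M.V x →ₗ[k] M.V x) ^ m),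
    fun x => ⨆ m, LinearMap.ker ((θ.app x : M.V x →ₗ[k] M.V x) ^ m),
    ?_, ?_, compl, key, ?_, ?_, ?_⟩
  · rintro x y f _ ⟨v, hv, rfl⟩
    simp only [SetLike.mem_coe, Submodule.mem_iInf] at hv ⊢
    intro n
    obtain ⟨w, rfl⟩ := hv n
    exact ⟨M.map f w, (nat x y f n w).symm⟩
  · rintro x y f _ ⟨v, hv, rfl⟩
    obtain ⟨N, hN⟩ := key x
    dsimp only at hv ⊢
    rw [SetLike.mem_coe, (hN N le_rfl).2, LinearMap.mem_ker] at hv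
    apply Submodule.mem_iSup_of_mem N
    rw [LinearMap.mem_ker, ← nat, hv, map_zero]
  · intro x
    obtain ⟨N, hN⟩ := key x
    dsimp only
    conv_rhs => rw [(hN (N + 1) (Nat.le_succ N)).1]
    rw [(hN N le_rfl).1, pow_succ', Module.End.mul_eq_comp, LinearMap.range_comp]
  · intro x m hm h0
    refine Submodule.disjoint_def.mp (compl x).disjoint m hm ?_
    apply Submodule.mem_iSup_of_mem 1
    rw [LinearMap.mem_ker, pow_one, h0]
  · intro x
    obtain ⟨N, hN⟩ := key x
    refine ⟨N, fun m hm => ?_⟩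
    dsimp only at hm
    rwa [(hN N le_rfl).2, LinearMap.mem_ker] at hm
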